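/- For every r ∈ ℕ there exist w ∈ ℕ and a coloring g : Pos → {green, red} such that T^w(greenify(T^r(π₀, 𝐠𝐫𝐞𝐞𝐧))) = (π₀, g), where greenify(π,f) := (π, 𝐠𝐫𝐞𝐞𝐧) replaces the coloring by the identically green one. In other words, after greenifying any iterate, further iteration of T returns to the original permutation π₀. -/

import Mathlib

/-!
Regard `(π, f)` as a word cut into blocks, the maximal intervals joined by red positions, and let
`flipIx f` reflect every block. A step of `T` replaces `π` on the merged interval `[a, b]` by
`k ↦ π (flipIx f (a + b - k))`. Hence, by involutivity of `flipIx f`, every iterate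
of `(π₀, green)` is `(π₀ ∘ flipIx f, f)` for some coloring `f`: the word `π₀` with each block
reversed in place (`reach_all`).

The colorings that occur are exactly the greedy ones, `Good π₀ n f`: the prefix `[1, n]` is cut into
blocks, each of which ends at the last letter of the prefix lying in the clique of its first
letter. Such a coloring exists for every `n ≤ μ` and is reached by iterating `T` (`reach_prefix`,
from `good_step`), and it is determined by `π₀` and `n` (`good_unique`). Reversing each block
exchanges its two end letters, which lie in one clique, and preserves the set of letters of each
block; so `f` is also greedy for the word `π₀ ∘ flipIx f` (`good_flip`). Consequently, iterating `T`
from the greenified word `π₀ ∘ flipIx f` reaches the coloring `f` again, and there the word is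
`π₀ ∘ flipIx f ∘ flipIx f = π₀`.
-/

attribute [local instance] Classical.propDecidable

inductive Col where
  | green : Col
  | red : Col
deriving DecidableEq

namespace TOp

/-- The color of position `k⁺`; positions outside `{lo⁺, …, (hi−1)⁺}` count as green. -/
def fpos (lo hi : ℕ) (f : ℕ → Col) (k : ℕ) : Col :=
  if lo ≤ k ∧ k + 1 ≤ hi then f k else Col.green

/-- `j` is a candidate value for `j_{(π,f)}` : there is `i < j` with
`f(i⁺) = f(j⁻) = green` and `{i,j} ∈ π⁻¹(𝓔)`. -/
def jSpec (lo hi : ℕ) (E : ℕ → ℕ → Prop) (π : ℕ → ℕ) (f : ℕ → Col) (j : ℕ) : Prop :=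
  lo ≤ j ∧ j ≤ hi ∧ ∃ i, lo ≤ i ∧ i < j ∧
    fpos lo hi f i = Col.green ∧ fpos lo hi f (j - 1) = Col.green ∧ E (π i) (π j)

/-- `(π,f)` is not a fixed point of `T`, i.e. `j_{(π,f)} < +∞`. -/
def hasJ (lo hi : ℕ) (E : ℕ → ℕ → Prop) (π : ℕ → ℕ) (f : ℕ → Col) : Prop :=
  ∃ j, jSpec lo hi E π f j

/-- `j_{(π,f)}` (junk value if no candidate exists). -/
noncomputable def jVal (lo hi : ℕ) (E : ℕ → ℕ → Prop) (π : ℕ → ℕ) (f : ℕ → Col) : ℕ :=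
  sInf {j | jSpec lo hi E π f j}

/-- `i_{(π,f)}`. -/
noncomputable def iVal (lo hi : ℕ) (E : ℕ → ℕ → Prop) (π : ℕ → ℕ) (f : ℕ → Col) : ℕ :=
  sSup {i | lo ≤ i ∧ i < jVal lo hi E π f ∧ fpos lo hi f i = Col.green ∧
    E (π i) (π (jVal lo hi E π f))}

/-- `a_{(π,f)}(k)`. -/
noncomputable def aVal (lo hi : ℕ) (f : ℕ → Col) (k : ℕ) : ℕ :=
  if fpos lo hi f (k - 1) = Col.green then k
  else sInf {i' | i' ≤ k ∧ ∀ i'', i' ≤ i'' → i'' < k → fpos lo hi f i'' = Col.red}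

/-- `b_{(π,f)}(k)`. -/
noncomputable def bVal (lo hi : ℕ) (f : ℕ → Col) (k : ℕ) : ℕ :=
  if fpos lo hi f k = Col.green then k
  else sSup {j' | k ≤ j' ∧ ∀ j'', k < j'' → j'' ≤ j' → fpos lo hi f (j'' - 1) = Col.red}

/-- The operator `T` on states `(π, f)`. -/
noncomputable def Tstep (lo hi : ℕ) (E : ℕ → ℕ → Prop)
    (s : (ℕ → ℕ) × (ℕ → Col)) : (ℕ → ℕ) × (ℕ → Col) :=
  if hasJ lo hi E s.1 s.2 then
    let a := aVal lo hi s.2 (iVal lo hi E s.1 s.2)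
    let b := bVal lo hi s.2 (jVal lo hi E s.1 s.2)
    (fun k => if a ≤ k ∧ k ≤ b then
        s.1 (aVal lo hi s.2 (a + b - k) + bVal lo hi s.2 (a + b - k) - (a + b - k))
      else s.1 k,
     fun k => if a ≤ k ∧ k < b then Col.red else s.2 k)
  else s

/-- `(π_r, f_r) = T^r(π₀, 𝐠𝐫𝐞𝐞𝐧)`. -/
noncomputable def TIter (lo hi : ℕ) (E : ℕ → ℕ → Prop) (π₀ : ℕ → ℕ) (r : ℕ) :
    (ℕ → ℕ) × (ℕ → Col) :=
  (Tstep lo hi E)^[r] (π₀, fun _ => Col.green)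

/-- `j_{(π,f)}` as an extended natural number (`⊤` encodes `+∞`). -/
noncomputable def jE (lo hi : ℕ) (E : ℕ → ℕ → Prop) (π : ℕ → ℕ) (f : ℕ → Col) : ℕ∞ :=
  if hasJ lo hi E π f then (jVal lo hi E π f : ℕ∞) else ⊤

end TOp

namespace TOp

/-- `[p, q]` is a maximal interval joined by red positions. Natural subtraction makes `[0, 0]` a
block whenever `0` is green, which is harmless. -/
def IsBlock (f : ℕ → Col) (p q : ℕ) : Prop :=
  p ≤ q ∧ f (p - 1) = Col.green ∧ f q = Col.green ∧ ∀ x, p ≤ x → x < q → f x = Col.red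

/-- The index map `k ↦ ←k` reflecting every block of `f`. -/
noncomputable def flipIx (μ : ℕ) (f : ℕ → Col) (k : ℕ) : ℕ :=
  aVal 1 μ f k + bVal 1 μ f k - k

/-- `f` is the greedy coloring of the prefix `[1, n]` of the word `π`: red positions lie inside the
prefix, the two ends of a block are equal or form an eligible pair, and nothing in the prefix to
the right of the end of a block is eligible with that end. -/
def Good (μ : ℕ) (E : ℕ → ℕ → Prop) (π : ℕ → ℕ) (n : ℕ) (f : ℕ → Col) : Prop :=
  n ≤ μ ∧ (∀ k, f k = Col.red → 1 ≤ k ∧ k + 1 ≤ n) ∧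
  (∀ p q, IsBlock f p q → p = q ∨ E (π p) (π q)) ∧
  (∀ i, f i = Col.green → 1 ≤ i → ∀ k, i < k → k ≤ n → ¬ E (π i) (π k))

/-- The word `π` with every block of `f` reversed, together with the coloring `f`. -/
noncomputable def flipState (μ : ℕ) (π : ℕ → ℕ) (f : ℕ → Col) : (ℕ → ℕ) × (ℕ → Col) :=
  (fun k => π (flipIx μ f k), f)

lemma green_or_red (c : Col) : c = Col.green ∨ c = Col.red := by cases c <;> simp

lemma green_ne_red {c : Col} (h : c = Col.green) (h' : c = Col.red) : False := by
  rw [h] at h'; cases h'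

/-! ### Blocks and their reflection -/

section Blocks

variable {μ n : ℕ} {f : ℕ → Col}

lemma fpos_eq (hn : n ≤ μ) (hf : ∀ k, f k = Col.red → 1 ≤ k ∧ k + 1 ≤ n) (k : ℕ) :
    fpos 1 μ f k = f k := by
  unfold fpos
  split_ifs with h
  · rfl
  · rcases green_or_red (f k) with h' | h'
    · exact h'.symm
    · have := hf k h'; omega

lemma exists_block (hf : ∀ k, f k = Col.red → 1 ≤ k ∧ k + 1 ≤ n) (k : ℕ) :
    ∃ p q, p ≤ k ∧ k ≤ q ∧ IsBlock f p q := by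
  have green_out : ∀ k, ¬ (1 ≤ k ∧ k + 1 ≤ n) → f k = Col.green := fun k hk =>
    (green_or_red (f k)).resolve_right fun h => hk (hf k h)
  have left : ∃ p, p ≤ k ∧ f (p - 1) = Col.green ∧ ∀ x, p ≤ x → x < k → f x = Col.red := by
    induction k with
    | zero => exact ⟨0, le_rfl, green_out _ (by simp), fun x _ h => absurd h (by simp)⟩
    | succ k ih =>
      rcases green_or_red (f k) with h | h
      · exact ⟨k + 1, le_rfl, h, fun x h1 h2 => by omega⟩
      · obtain ⟨p, h1, h2, h3⟩ := ih
        refine ⟨p, by omega, h2, fun x hx hx' => ?_⟩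
        rcases Nat.lt_succ_iff_lt_or_eq.mp hx' with h4 | rfl
        · exact h3 x hx h4
        · exact h
  have right : ∃ q, k ≤ q ∧ f q = Col.green := ⟨k + n, by omega, green_out _ (by omega)⟩
  classical
  obtain ⟨p, h1, h2, h3⟩ := left
  obtain ⟨h4, h5⟩ := Nat.find_spec right
  refine ⟨p, Nat.find right, h1, h4, by omega, h2, h5, fun x hx hx' => ?_⟩
  by_cases hxk : x < k
  · exact h3 x hx hxk
  · exact (green_or_red (f x)).resolve_left fun h => Nat.find_min right hx' ⟨by omega, h⟩

lemma aVal_block (hfp : ∀ k, fpos 1 μ f k = f k) {p q k : ℕ} (hb : IsBlock f p q)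
    (hp : p ≤ k) (hq : k ≤ q) : aVal 1 μ f k = p := by
  obtain ⟨-, h1, -, h3⟩ := hb
  unfold aVal
  simp only [hfp]
  split_ifs with h
  · by_contra hne
    exact green_ne_red h (h3 (k - 1) (by omega) (by omega))
  · refine IsLeast.csInf_eq ⟨⟨hp, fun x hx hx' => h3 x hx (by omega)⟩, ?_⟩
    rintro i ⟨-, hi⟩
    by_contra hlt
    exact green_ne_red h1 (hi (p - 1) (by omega) (by omega))

lemma bVal_block (hfp : ∀ k, fpos 1 μ f k = f k) {p q k : ℕ} (hb : IsBlock f p q)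
    (hp : p ≤ k) (hq : k ≤ q) : bVal 1 μ f k = q := by
  obtain ⟨-, -, h2, h3⟩ := hb
  unfold bVal
  simp only [hfp]
  split_ifs with h
  · by_contra hne
    exact green_ne_red h (h3 k (by omega) (by omega))
  · refine IsGreatest.csSup_eq ⟨⟨hq, fun x hx hx' => h3 _ (by omega) (by omega)⟩, ?_⟩
    rintro j ⟨-, hj⟩
    by_contra hlt
    exact green_ne_red h2 (hj (q + 1) (by omega) (by omega))

lemma flipIx_block (hfp : ∀ k, fpos 1 μ f k = f k) {p q k : ℕ} (hb : IsBlock f p q)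
    (hp : p ≤ k) (hq : k ≤ q) : flipIx μ f k = p + q - k := by
  rw [flipIx, aVal_block hfp hb hp hq, bVal_block hfp hb hp hq]

lemma flipIx_flipIx (hn : n ≤ μ) (hf : ∀ k, f k = Col.red → 1 ≤ k ∧ k + 1 ≤ n) (k : ℕ) :
    flipIx μ f (flipIx μ f k) = k := by
  obtain ⟨p, q, hp, hq, hb⟩ := exists_block hf k
  rw [flipIx_block (fpos_eq hn hf) hb hp hq,
    flipIx_block (fpos_eq hn hf) hb (by omega) (by omega)]
  omega

/-- Blocks meeting `[1, m]`, for any `m ≥ n`, stay inside it. -/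
lemma block_bounds (hf : ∀ k, f k = Col.red → 1 ≤ k ∧ k + 1 ≤ n) {m p q k : ℕ}
    (hb : IsBlock f p q) (hp : p ≤ k) (hq : k ≤ q) (hk : 1 ≤ k) (hkm : k ≤ m) (hnm : n ≤ m) :
    1 ≤ p ∧ q ≤ m := by
  obtain ⟨-, h1, h2, h3⟩ := hb
  constructor
  · by_contra h
    have := hf _ (h3 p le_rfl (by omega))
    omega
  · by_contra h
    have := hf _ (h3 (q - 1) (by omega) (by omega))
    omega

lemma flipIx_mem (hn : n ≤ μ) (hf : ∀ k, f k = Col.red → 1 ≤ k ∧ k + 1 ≤ n) {m k : ℕ}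
    (hk : 1 ≤ k) (hkm : k ≤ m) (hnm : n ≤ m) : 1 ≤ flipIx μ f k ∧ flipIx μ f k ≤ m := by
  obtain ⟨p, q, hp, hq, hb⟩ := exists_block hf k
  have := block_bounds hf hb hp hq hk hkm hnm
  rw [flipIx_block (fpos_eq hn hf) hb hp hq]
  omega

lemma flipState_flipState (hn : n ≤ μ) (hf : ∀ k, f k = Col.red → 1 ≤ k ∧ k + 1 ≤ n)
    (π : ℕ → ℕ) : flipState μ (flipState μ π f).1 f = (π, f) := by
  simp only [flipState, flipIx_flipIx hn hf]

end Blocks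

/-! ### Greedy colorings -/

section Greedy

variable {μ n : ℕ} {E : ℕ → ℕ → Prop} {π : ℕ → ℕ} {f : ℕ → Col}

lemma flip_injOn (hg : Good μ E π n f) (hinj : Set.InjOn π (Set.Icc 1 μ)) :
    Set.InjOn (flipState μ π f).1 (Set.Icc 1 μ) := by
  obtain ⟨hn, hf, -, -⟩ := hg
  intro x hx y hy hxy
  have := hinj (flipIx_mem hn hf hx.1 hx.2 hn) (flipIx_mem hn hf hy.1 hy.2 hn) hxy
  rw [← flipIx_flipIx hn hf x, this, flipIx_flipIx hn hf]

lemma good_green : Good μ E π 0 (fun _ => Col.green) := by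
  refine ⟨Nat.zero_le _, fun k h => (nomatch h), ?_, fun i _ h k h1 h2 => by omega⟩
  rintro p q ⟨hpq, -, -, h⟩
  left
  by_contra hne
  exact nomatch h p le_rfl (by omega)

/-- Two greedy colorings of the same prefix cannot first disagree at a position `k` that is green
for the first and red for the second. -/
lemma good_unique_aux
    (hEsymm : ∀ x y, E x y → E y x) (hEclique : ∀ x y z, E x y → E y z → x ≠ z → E x z)
    (hinj : Set.InjOn π (Set.Icc 1 μ)) {f' : ℕ → Col}
    (hg : Good μ E π n f) (hg' : Good μ E π n f') {k : ℕ} (hlt : ∀ x, x < k → f x = f' x)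
    (hk : f k = Col.green) (hk' : f' k = Col.red) : False := by
  obtain ⟨hn, hf, h2, h3⟩ := hg
  obtain ⟨-, hf', h2', -⟩ := hg'
  obtain ⟨hk1, hkn⟩ := hf' k hk'
  obtain ⟨p, q, hp, hq, hb⟩ := exists_block hf' k
  have hbd := block_bounds hf' hb hp hq hk1 (by omega) le_rfl
  have hE' := h2' p q hb
  obtain ⟨-, g1, g2, g3⟩ := hb
  have hkq : k ≠ q := by
    rintro rfl
    exact green_ne_red g2 hk'
  have hE := h2 p k ⟨hp, by rw [hlt _ (by omega)]; exact g1, hk, fun x hx hx' => by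
    rw [hlt _ hx']; exact g3 x hx (by omega)⟩
  refine h3 k hk hk1 q (by omega) hbd.2 ?_
  have hpq : E (π p) (π q) := hE'.resolve_left (by omega)
  rcases hE with rfl | hE
  · exact hpq
  · refine hEclique _ _ _ (hEsymm _ _ hE) hpq fun h => hkq ?_
    exact hinj ⟨hk1, by omega⟩ ⟨by omega, by omega⟩ h

lemma good_unique
    (hEsymm : ∀ x y, E x y → E y x) (hEclique : ∀ x y z, E x y → E y z → x ≠ z → E x z)
    (hinj : Set.InjOn π (Set.Icc 1 μ)) {f' : ℕ → Col}
    (hg : Good μ E π n f) (hg' : Good μ E π n f') : f = f' := by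
  funext k
  induction k using Nat.strong_induction_on with
  | _ k ih =>
    rcases green_or_red (f k) with h | h <;> rcases green_or_red (f' k) with h' | h'
    · rw [h, h']
    · exact (good_unique_aux hEsymm hEclique hinj hg hg' ih h h').elim
    · exact (good_unique_aux hEsymm hEclique hinj hg' hg (fun x hx => (ih x hx).symm) h' h).elim
    · rw [h, h']

/-- Reversing the blocks of a greedy coloring gives a word for which it is again greedy. -/
lemma good_flip
    (hEsymm : ∀ x y, E x y → E y x) (hEclique : ∀ x y z, E x y → E y z → x ≠ z → E x z)
    (hinj : Set.InjOn π (Set.Icc 1 μ)) (hg : Good μ E π n f) :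
    Good μ E (flipState μ π f).1 n f := by
  obtain ⟨hn, hf, h2, h3⟩ := hg
  have hfp := fpos_eq hn hf
  refine ⟨hn, hf, fun p q hb => ?_, fun i hi hi1 k hik hkn hE => ?_⟩
  · have hpq := hb.1
    refine (h2 p q hb).imp id fun h => ?_
    simp only [flipState]
    rw [flipIx_block hfp hb le_rfl hpq, flipIx_block hfp hb hpq le_rfl, Nat.add_sub_cancel,
      Nat.add_sub_cancel_left]
    exact hEsymm _ _ h
  · simp only [flipState] at hE
    obtain ⟨p, q, hp, hq, hb⟩ := exists_block hf i
    have hqi : q = i := by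
      by_contra hne
      exact green_ne_red hi (hb.2.2.2 i hp (by omega))
    subst hqi
    obtain ⟨p', q', hp', hq', hb'⟩ := exists_block hf k
    have hip : q < p' := by
      by_contra hle
      exact green_ne_red hi (hb'.2.2.2 q (by omega) (by omega))
    have hbd := block_bounds hf hb hp hq hi1 (show q ≤ n by omega) le_rfl
    have hbd' := block_bounds hf hb' hp' hq' (by omega) hkn le_rfl
    rw [flipIx_block hfp hb hp hq, flipIx_block hfp hb' hp' hq', Nat.add_sub_cancel] at hE
    refine h3 q hi hi1 (p' + q' - k) (by omega) (by omega) ?_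
    rcases h2 p q hb with rfl | h
    · exact hE
    · refine hEclique _ _ _ (hEsymm _ _ h) hE fun he => ?_
      have := hinj ⟨hi1, by omega⟩ ⟨by omega, by omega⟩ he
      omega

/-! ### The dynamics of `T` -/

/-- In a state whose coloring is greedy on `[1, n]`, the next step of `T` can only occur at some
`j > n`. -/
lemma jSpec_gt
    (hEsymm : ∀ x y, E x y → E y x) (hEclique : ∀ x y z, E x y → E y z → x ≠ z → E x z)
    (hinj : Set.InjOn π (Set.Icc 1 μ)) (hg : Good μ E π n f) {j : ℕ}
    (hj : jSpec 1 μ E (flipState μ π f).1 f j) : n < j := by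
  obtain ⟨-, -, i, hi, hij, hgi, -, hE⟩ := hj
  rw [fpos_eq hg.1 hg.2.1] at hgi
  by_contra hle
  exact (good_flip hEsymm hEclique hinj hg).2.2.2 i hgi hi j hij (by omega) hE

/-- Passing from the greedy coloring of `[1, n]` to that of `[1, n + 1]` takes no step or one step
of `T`. -/
lemma good_step
    (hEsymm : ∀ x y, E x y → E y x) (hEclique : ∀ x y z, E x y → E y z → x ≠ z → E x z)
    (hinj : Set.InjOn π (Set.Icc 1 μ)) (hg : Good μ E π n f) (hnμ : n < μ) :
    Good μ E π (n + 1) f ∨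
      ∃ f', Good μ E π (n + 1) f' ∧ Tstep 1 μ E (flipState μ π f) = flipState μ π f' := by
  have hgt := fun j => jSpec_gt (j := j) hEsymm hEclique hinj hg
  obtain ⟨hn, hf, h2, h3⟩ := hg
  have hfp := fpos_eq hn hf
  have hout : ∀ k, n ≤ k → f k = Col.green := fun k hk =>
    (green_or_red (f k)).resolve_right fun h => by have := hf k h; omega
  have hblk : IsBlock f (n + 1) (n + 1) :=
    ⟨le_rfl, hout _ (by omega), hout _ (by omega), fun x h h' => by omega⟩
  have hflip : flipIx μ f (n + 1) = n + 1 := by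
    rw [flipIx_block hfp hblk le_rfl le_rfl]; omega
  by_cases hex : ∃ i, 1 ≤ i ∧ i < n + 1 ∧ f i = Col.green ∧
      E (π (flipIx μ f i)) (π (n + 1))
  · right
    have hspec : jSpec 1 μ E (flipState μ π f).1 f (n + 1) := by
      obtain ⟨i, hi1, hin, hgi, hE⟩ := hex
      refine ⟨by omega, hnμ, i, hi1, hin, by rw [hfp]; exact hgi,
        by rw [hfp]; exact hout _ (by omega), ?_⟩
      simpa only [flipState, hflip] using hE
    have hjv : jVal 1 μ E (flipState μ π f).1 f = n + 1 :=
      IsLeast.csInf_eq ⟨hspec, fun j hj => hgt j hj⟩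
    set i := iVal 1 μ E (flipState μ π f).1 f with hi
    have himem : 1 ≤ i ∧ i < n + 1 ∧ f i = Col.green ∧ E (π (flipIx μ f i)) (π (n + 1)) := by
      have : i ∈ {i | 1 ≤ i ∧ i < n + 1 ∧ f i = Col.green ∧
          E (π (flipIx μ f i)) (π (n + 1))} := by
        rw [hi, iVal, hjv]
        simp only [hfp, flipState, hflip]
        exact Nat.sSup_mem hex ⟨n + 1, fun x hx => hx.2.1.le⟩
      exact this
    obtain ⟨hi1, hin, hgi, hE⟩ := himem
    obtain ⟨a, q, hai, hiq, hb⟩ := exists_block hf i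
    have hqi : q = i := by
      by_contra hne
      exact green_ne_red hgi (hb.2.2.2 i hai (by omega))
    subst hqi
    have ha1 := (block_bounds hf hb hai le_rfl hi1 (show i ≤ n by omega) le_rfl).1
    have hav : aVal 1 μ f i = a := aVal_block hfp hb hai le_rfl
    have hbv : bVal 1 μ f (n + 1) = n + 1 := bVal_block hfp hblk le_rfl le_rfl
    -- The first letter of the merged block in the original word is eligible with the new letter.
    have hEa : E (π a) (π (n + 1)) := by
      rwa [flipIx_block hfp hb hai le_rfl, Nat.add_sub_cancel] at hE
    set f' : ℕ → Col := fun k => if a ≤ k ∧ k < n + 1 then Col.red else f k with hf'def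
    have hin' : ∀ k, a ≤ k → k < n + 1 → f' k = Col.red := fun k h1 h2 => if_pos ⟨h1, h2⟩
    have hout' : ∀ k, ¬ (a ≤ k ∧ k < n + 1) → f' k = f k := fun k h => if_neg h
    have hf' : ∀ k, f' k = Col.red → 1 ≤ k ∧ k + 1 ≤ n + 1 := by
      intro k hk
      by_cases h : a ≤ k ∧ k < n + 1
      · omega
      · rw [hout' k h] at hk
        have := hf k hk
        omega
    have hfp' := fpos_eq (show n + 1 ≤ μ from hnμ) hf'
    have hnew : IsBlock f' a (n + 1) :=
      ⟨by omega, by rw [hout' _ (by omega)]; exact hb.2.1,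
        by rw [hout' _ (by omega)]; exact hout _ (by omega), hin'⟩
    -- Every block of `f'` other than `[a, n + 1]` lies outside that interval and is one of `f`.
    have hold : ∀ p q, IsBlock f' p q → (p = a ∧ q = n + 1) ∨
        ((q < a ∨ n + 1 < p) ∧ IsBlock f p q) := by
      rintro p q ⟨g0, g1, g2, g3⟩
      by_cases h1 : q < a
      · refine .inr ⟨.inl h1, g0, ?_, ?_, fun x hx hx' => ?_⟩
        · rwa [hout' _ (by omega)] at g1
        · rwa [hout' _ (by omega)] at g2
        · rw [← hout' x (by omega)]; exact g3 x hx hx'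
      by_cases h2 : n + 1 < p
      · refine .inr ⟨.inr h2, g0, ?_, ?_, fun x hx hx' => ?_⟩
        · rwa [hout' _ (by omega)] at g1
        · rwa [hout' _ (by omega)] at g2
        · rw [← hout' x (by omega)]; exact g3 x hx hx'
      left
      have hq : n + 1 ≤ q := by
        by_contra h
        exact green_ne_red g2 (hin' q (by omega) (by omega))
      have hp : p ≤ a := by
        by_contra h
        exact green_ne_red g1 (hin' (p - 1) (by omega) (by omega))
      constructor
      · by_contra h
        exact green_ne_red hnew.2.1 (g3 (a - 1) (by omega) (by omega))
      · by_contra h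
        exact green_ne_red hnew.2.2.1 (g3 (n + 1) (by omega) (by omega))
    refine ⟨f', ⟨hnμ, hf', fun p q hpq => ?_, fun i hgi' hi1' k hik hkn hEk => ?_⟩, ?_⟩
    · rcases hold p q hpq with ⟨rfl, rfl⟩ | ⟨-, h⟩
      · exact .inr hEa
      · exact h2 p q h
    · have hia : i < a := by
        by_contra h
        exact green_ne_red hgi' (hin' i (by omega) (by omega))
      rw [hout' i (by omega)] at hgi'
      rcases Nat.lt_succ_iff_lt_or_eq.mp (Nat.lt_succ_of_le hkn) with h | rfl
      · exact h3 i hgi' hi1' k hik (by omega) hEk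
      · refine h3 i hgi' hi1' a hia (by omega)
          (hEclique _ _ _ hEk (hEsymm _ _ hEa) fun he => ?_)
        have := hinj ⟨hi1', by omega⟩ ⟨ha1, by omega⟩ he
        omega
    · rw [Tstep, if_pos ⟨n + 1, hspec⟩]
      refine Prod.ext (funext fun k => ?_) ?_
      · change (if aVal 1 μ f (iVal 1 μ E (flipState μ π f).1 f) ≤ k ∧
            k ≤ bVal 1 μ f (jVal 1 μ E (flipState μ π f).1 f)
          then π (flipIx μ f (flipIx μ f (aVal 1 μ f (iVal 1 μ E (flipState μ π f).1 f) +
            bVal 1 μ f (jVal 1 μ E (flipState μ π f).1 f) - k)))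
          else π (flipIx μ f k)) = π (flipIx μ f' k)
        rw [hjv, ← hi, hav, hbv, flipIx_flipIx hn hf]
        split_ifs with hk
        · rw [flipIx_block hfp' hnew hk.1 hk.2]
        · obtain ⟨p, r, hp, hr, hpr⟩ := exists_block hf' k
          rcases hold p r hpr with ⟨rfl, rfl⟩ | ⟨-, h⟩
          · exact absurd ⟨hp, hr⟩ hk
          · rw [flipIx_block hfp' hpr hp hr, flipIx_block hfp h hp hr]
      · change (fun k => if aVal 1 μ f (iVal 1 μ E (flipState μ π f).1 f) ≤ k ∧
            k < bVal 1 μ f (jVal 1 μ E (flipState μ π f).1 f) then Col.red else f k) = f'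
        rw [hjv, ← hi, hav, hbv]
  · left
    refine ⟨hnμ, fun k hk => by have := hf k hk; omega, h2, fun i hgi hi1 k hik hkn hEk => ?_⟩
    rcases Nat.lt_succ_iff_lt_or_eq.mp (Nat.lt_succ_of_le hkn) with h | rfl
    · exact h3 i hgi hi1 k hik (by omega) hEk
    · obtain ⟨p, q, hp, hq, hb⟩ := exists_block hf i
      have hqi : q = i := by
        by_contra hne
        exact green_ne_red hgi (hb.2.2.2 i hp (by omega))
      subst hqi
      have hp1 := (block_bounds hf hb hp le_rfl hi1 (show q ≤ n by omega) le_rfl).1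
      refine hex ⟨q, hi1, hik, hgi, ?_⟩
      rw [flipIx_block hfp hb hp le_rfl, Nat.add_sub_cancel]
      rcases h2 p q hb with rfl | h
      · exact hEk
      · refine hEclique _ _ _ h hEk fun he => ?_
        have := hinj ⟨hp1, by omega⟩ ⟨by omega, by omega⟩ he
        omega

lemma flipState_green : flipState μ π (fun _ => Col.green) = (π, fun _ => Col.green) := by
  refine Prod.ext (funext fun k => ?_) rfl
  simp [flipState, flipIx, aVal, bVal, fpos]

/-- The greedy state of every prefix is an iterate of the green state. -/
lemma reach_prefix
    (hEsymm : ∀ x y, E x y → E y x) (hEclique : ∀ x y z, E x y → E y z → x ≠ z → E x z)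
    (hinj : Set.InjOn π (Set.Icc 1 μ)) (n : ℕ) (hn : n ≤ μ) :
    ∃ w f, Good μ E π n f ∧
      (Tstep 1 μ E)^[w] (π, fun _ => Col.green) = flipState μ π f := by
  induction n with
  | zero => exact ⟨0, _, good_green, flipState_green.symm⟩
  | succ n ih =>
    obtain ⟨w, f, hg, hw⟩ := ih (by omega)
    rcases good_step hEsymm hEclique hinj hg hn with h | ⟨f', h, hT⟩
    · exact ⟨w, f, h, hw⟩
    · exact ⟨w + 1, f', h, by rw [Function.iterate_succ_apply', hw, hT]⟩

lemma tstep_good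
    (hEsymm : ∀ x y, E x y → E y x) (hEclique : ∀ x y z, E x y → E y z → x ≠ z → E x z)
    (hinj : Set.InjOn π (Set.Icc 1 μ)) (hg : Good μ E π n f) :
    ∃ m f', Good μ E π m f' ∧ Tstep 1 μ E (flipState μ π f) = flipState μ π f' := by
  obtain ⟨d, hd⟩ : ∃ d, n + d = μ := ⟨μ - n, by have := hg.1; omega⟩
  induction d generalizing n with
  | zero =>
    refine ⟨n, f, hg, ?_⟩
    rw [Tstep, if_neg]
    rintro ⟨j, hj⟩
    have := jSpec_gt hEsymm hEclique hinj hg hj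
    have := hj.2.1
    omega
  | succ d ih =>
    rcases good_step hEsymm hEclique hinj hg (by omega) with h | ⟨f', h, hT⟩
    · exact ih h (by omega)
    · exact ⟨n + 1, f', h, hT⟩

/-- Every iterate of the green state is the greedy state of some prefix. -/
lemma reach_all
    (hEsymm : ∀ x y, E x y → E y x) (hEclique : ∀ x y z, E x y → E y z → x ≠ z → E x z)
    (hinj : Set.InjOn π (Set.Icc 1 μ)) (r : ℕ) :
    ∃ n f, Good μ E π n f ∧ TIter 1 μ E π r = flipState μ π f := by
  induction r with
  | zero => exact ⟨0, _, good_green, flipState_green.symm⟩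
  | succ r ih =>
    obtain ⟨n, f, hg, hr⟩ := ih
    rw [TIter] at hr
    rw [TIter, Function.iterate_succ_apply', hr]
    exact tstep_good hEsymm hEclique hinj hg

end Greedy

end TOp

open TOp in
/-- For every `r ∈ ℕ` there exist `w ∈ ℕ` and a coloring `g` such that
`T^w(greenify(T^r(π₀, 𝐠𝐫𝐞𝐞𝐧))) = (π₀, g)`: after greenifying any iterate, further
iteration of `T` returns to the original permutation `π₀`. -/
theorem stmt10 (μ : ℕ) (hμ : 2 ≤ μ) (E : ℕ → ℕ → Prop)
    (hEsymm : ∀ x y, E x y → E y x)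
    (hEirr : ∀ x, ¬ E x x)
    (hEmem : ∀ x y, E x y → 1 ≤ x ∧ x ≤ μ ∧ 1 ≤ y ∧ y ≤ μ)
    (hEclique : ∀ x y z, E x y → E y z → x ≠ z → E x z)
    (π₀ : ℕ → ℕ) (hπ₀ : Set.BijOn π₀ (Set.Icc 1 μ) (Set.Icc 1 μ))
    (r : ℕ) :
    ∃ (w : ℕ) (g : ℕ → Col),
      (Tstep 1 μ E)^[w] ((TIter 1 μ E π₀ r).1, fun _ => Col.green) = (π₀, g) := by
  obtain ⟨n, f, hg, hr⟩ := reach_all hEsymm hEclique hπ₀.injOn r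
  have hinj := flip_injOn hg hπ₀.injOn
  obtain ⟨w, f', hg', hw⟩ := reach_prefix hEsymm hEclique hinj n hg.1
  have hff : f = f' :=
    good_unique hEsymm hEclique hinj (good_flip hEsymm hEclique hπ₀.injOn hg) hg'
  subst hff
  exact ⟨w, f, by rw [hr, hw, flipState_flipState hg.1 hg.2.1]⟩
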